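/- Let R : ℝ → ℝ be twice differentiable and Re > 0. Define the velocity field u(x,t) = R'(t) R(t)² · x/‖x‖³ and the pressure p(x,t) = R(t) ( R''(t) R(t) + 2 R'(t)² ) / ‖x‖ for x ∈ ℝ³ ∖ {0}. Then for every x ≠ 0 and every t, the pair (u,p) satisfies the unsteady incompressible Stokes equations: ∂u/∂t (x,t) + ∇_x p(x,t) = (1/Re) Δ_x u(x,t) and div_x u(x,t) = 0, where in fact Δ_x u(x,t) = 0. -/

import Mathlib

/-- Exact velocity field of the pulsating bubble with radius law `R(t)`:
`u(t,x) = R'(t) R(t)² · x/‖x‖³`. -/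
noncomputable def pulsatingVel (R : ℝ → ℝ) (t : ℝ)
    (x : EuclideanSpace ℝ (Fin 3)) : EuclideanSpace ℝ (Fin 3) :=
  (deriv R t * (R t) ^ 2 / ‖x‖ ^ 3) • x

/-- Exact pressure field of the pulsating bubble:
`p(t,x) = R(t)(R''(t)R(t) + 2R'(t)²)/‖x‖`. -/
noncomputable def pulsatingPres (R : ℝ → ℝ) (t : ℝ)
    (x : EuclideanSpace ℝ (Fin 3)) : ℝ :=
  R t * (deriv (deriv R) t * R t + 2 * (deriv R t) ^ 2) / ‖x‖

/-! A point source of strength `q(t)` in `ℝⁿ` has velocity `u = q x/‖x‖ⁿ`. The fields `‖x‖ᵖ x` have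
divergence `(p + n) ‖x‖ᵖ` and Laplacian `p (p + n) ‖x‖ᵖ⁻² x`, so both vanish at `p = -n`. The
acceleration `q' x/‖x‖ⁿ` is minus the gradient of `q' ‖x‖²⁻ⁿ/(n - 2)` if `n ≠ 2`. The bubble is a
point source with `n = 3` and `q = R' R²`, whose rate of change `q'` is `R (R'' R + 2 R'²)`. -/

open Topology

/-- The radial power-law field `x ↦ c ‖x‖ᵖ x`; in `ℝⁿ` the exponent `p = -n` is that of a point
source at the origin. -/
noncomputable def radialField {E : Type*} [NormedAddCommGroup E] [NormedSpace ℝ E] (c p : ℝ)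
    (x : E) : E :=
  (c * ‖x‖ ^ p) • x

section InnerProductSpace

variable {E : Type*} [NormedAddCommGroup E] [InnerProductSpace ℝ E]

theorem hasFDerivAt_norm_rpow_of_ne_zero {x : E} (hx : x ≠ 0) (p : ℝ) :
    HasFDerivAt (fun y : E => ‖y‖ ^ p) ((p * ‖x‖ ^ (p - 2)) • innerSL ℝ x) x := by
  have hsq := (hasStrictFDerivAt_norm_sq x).hasFDerivAt.rpow_const (p := p / 2)
    (Or.inl (pow_ne_zero 2 (norm_ne_zero_iff.mpr hx)))
  simp_rw [← Real.rpow_natCast_mul (norm_nonneg _), ← Nat.cast_smul_eq_nsmul ℝ, smul_smul] at hsq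
  ring_nf at hsq ⊢
  exact hsq

theorem inner_radialField_sub_two_self {x : E} (hx : x ≠ 0) (c p : ℝ) :
    inner ℝ (radialField c (p - 2) x) x = c * ‖x‖ ^ p := by
  have hpow : ‖x‖ ^ (p - 2) * ‖x‖ ^ 2 = ‖x‖ ^ p := by
    rw [← Real.rpow_add_natCast (norm_ne_zero_iff.mpr hx)]
    norm_num
  rw [radialField, real_inner_smul_left, real_inner_self_eq_norm_sq, mul_assoc, hpow]

end InnerProductSpace

section Euclidean

variable {ι : Type*} [Fintype ι] {x : EuclideanSpace ℝ ι}

theorem radialField_apply (c p : ℝ) (x : EuclideanSpace ℝ ι) (i : ι) :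
    radialField c p x i = c * ‖x‖ ^ p * x i := rfl

theorem hasFDerivAt_radialField_apply (hx : x ≠ 0) (c p : ℝ) (i : ι) :
    HasFDerivAt (fun y : EuclideanSpace ℝ ι => radialField c p y i)
      ((c * ‖x‖ ^ p) • EuclideanSpace.proj i + radialField (c * p) (p - 2) x i • innerSL ℝ x)
      x := by
  refine (((hasFDerivAt_norm_rpow_of_ne_zero hx p).const_mul c).fun_mul
    (PiLp.hasFDerivAt_apply 2 x i)).congr_fderiv ?_
  rw [radialField_apply, smul_smul, smul_smul]
  congr 2
  ring

/-- Euler's identity: `radialField c p` is homogeneous of degree `p + 1`. -/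
theorem fderiv_radialField_apply_self (hx : x ≠ 0) (c p : ℝ) (i : ι) :
    fderiv ℝ (fun y : EuclideanSpace ℝ ι => radialField c p y i) x x =
      (p + 1) * radialField c p x i := by
  have hpow := inner_radialField_sub_two_self hx (c * p) p
  rw [radialField, real_inner_smul_left, real_inner_self_eq_norm_sq] at hpow
  rw [(hasFDerivAt_radialField_apply hx c p i).fderiv]
  simp only [add_apply, smul_apply, PiLp.proj_apply,
    innerSL_apply_apply, real_inner_self_eq_norm_sq, smul_eq_mul, radialField_apply]
  linear_combination x i * hpow

variable [DecidableEq ι]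

theorem fderiv_radialField_apply_single (hx : x ≠ 0) (c p : ℝ) (i j : ι) :
    fderiv ℝ (fun y : EuclideanSpace ℝ ι => radialField c p y i) x (EuclideanSpace.single j 1) =
      c * ‖x‖ ^ p * (if i = j then 1 else 0) + radialField (c * p) (p - 2) x i * x j := by
  rw [(hasFDerivAt_radialField_apply hx c p i).fderiv]
  simp [EuclideanSpace.inner_single_right]

theorem sum_fderiv_radialField_apply_single (hx : x ≠ 0) (c p : ℝ) :
    ∑ i, fderiv ℝ (fun y : EuclideanSpace ℝ ι => radialField c p y i) x
        (EuclideanSpace.single i 1) =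
      (p + Fintype.card ι) * (c * ‖x‖ ^ p) := by
  have hinner : ∑ i, radialField (c * p) (p - 2) x i * x i = c * p * ‖x‖ ^ p := by
    rw [← inner_radialField_sub_two_self hx, PiLp.inner_apply]
    simp [mul_comm]
  simp only [fderiv_radialField_apply_single hx, Finset.sum_add_distrib, hinner, if_true,
    mul_one, Finset.sum_const, Finset.card_univ, nsmul_eq_mul]
  ring

theorem fderiv_fderiv_radialField_apply_single (hx : x ≠ 0) (c p : ℝ) (i j : ι) :
    fderiv ℝ (fun y => fderiv ℝ (fun z : EuclideanSpace ℝ ι => radialField c p z i) y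
        (EuclideanSpace.single j 1)) x (EuclideanSpace.single j 1) =
      (if i = j then radialField (c * p) (p - 2) x i else 0) +
        (x j * fderiv ℝ (fun y : EuclideanSpace ℝ ι => radialField (c * p) (p - 2) y i) x
            (EuclideanSpace.single j 1) +
          radialField (c * p) (p - 2) x i) := by
  have hfirst : (fun y => fderiv ℝ (fun z : EuclideanSpace ℝ ι => radialField c p z i) y
      (EuclideanSpace.single j 1)) =ᶠ[𝓝 x] fun y =>
        c * ‖y‖ ^ p * (if i = j then 1 else 0) + radialField (c * p) (p - 2) y i * y j := by
    filter_upwards [isOpen_ne.mem_nhds hx] with y hy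
    exact fderiv_radialField_apply_single hy c p i j
  have hdiag := ((hasFDerivAt_norm_rpow_of_ne_zero hx p).const_mul c).mul_const
    (if i = j then (1 : ℝ) else 0)
  have hradial := (hasFDerivAt_radialField_apply hx (c * p) (p - 2) i).differentiableAt.hasFDerivAt
  rw [hfirst.fderiv_eq, (hdiag.fun_add (hradial.fun_mul (PiLp.hasFDerivAt_apply 2 x j))).fderiv]
  simp only [add_apply, smul_apply, smul_eq_mul, PiLp.proj_apply, innerSL_apply_apply,
    EuclideanSpace.inner_single_right, conj_trivial, one_mul, PiLp.single_apply, if_true]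
  rcases eq_or_ne i j with rfl | hij
  · simp only [if_true, radialField_apply]
    ring
  · simp only [if_neg hij]
    ring

theorem sum_fderiv_fderiv_radialField_apply_single (hx : x ≠ 0) (c p : ℝ) (i : ι) :
    ∑ j, fderiv ℝ (fun y => fderiv ℝ (fun z : EuclideanSpace ℝ ι => radialField c p z i) y
        (EuclideanSpace.single j 1)) x (EuclideanSpace.single j 1) =
      (p + Fintype.card ι) * radialField (c * p) (p - 2) x i := by
  have heuler : ∑ j, x j * fderiv ℝ
      (fun y : EuclideanSpace ℝ ι => radialField (c * p) (p - 2) y i) x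
        (EuclideanSpace.single j 1) = (p - 1) * radialField (c * p) (p - 2) x i := by
    have hbasis := (EuclideanSpace.basisFun ι ℝ).sum_repr x
    simp only [EuclideanSpace.basisFun_repr, EuclideanSpace.basisFun_apply] at hbasis
    simp only [← smul_eq_mul, ← map_smul, ← map_sum, hbasis]
    rw [fderiv_radialField_apply_self hx]
    ring
  simp only [fderiv_fderiv_radialField_apply_single hx, Finset.sum_add_distrib, heuler,
    Finset.sum_ite_eq, Finset.mem_univ, if_true, Finset.sum_const, Finset.card_univ,
    nsmul_eq_mul]
  ring

end Euclidean

section PointSource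

variable {ι : Type*} [Fintype ι]

/-- The velocity `q(t) x/‖x‖ⁿ`, `n = card ι`, of a point source of strength `q` at the origin
of `ℝⁿ`. -/
noncomputable def pointSourceVel (q : ℝ → ℝ) (t : ℝ) (x : EuclideanSpace ℝ ι) :
    EuclideanSpace ℝ ι :=
  radialField (q t) (-Fintype.card ι) x

/-- The pressure `q'(t) ‖x‖²⁻ⁿ/(n - 2)`, `n = card ι`, balancing the acceleration of
`pointSourceVel q`. In the plane the formula divides by zero: the potential there is
logarithmic. -/
noncomputable def pointSourcePres (q : ℝ → ℝ) (t : ℝ) (x : EuclideanSpace ℝ ι) : ℝ :=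
  deriv q t / (Fintype.card ι - 2) * ‖x‖ ^ (2 - Fintype.card ι : ℝ)

theorem deriv_pointSourceVel_apply {q : ℝ → ℝ} {t : ℝ} (hq : DifferentiableAt ℝ q t)
    (x : EuclideanSpace ℝ ι) (i : ι) :
    deriv (fun s => pointSourceVel q s x i) t =
      radialField (deriv q t) (-Fintype.card ι) x i :=
  ((hq.hasDerivAt.mul_const _).mul_const _).deriv

theorem fderiv_pointSourcePres_single [DecidableEq ι] (hι : Fintype.card ι ≠ 2) (q : ℝ → ℝ)
    (t : ℝ) {x : EuclideanSpace ℝ ι} (hx : x ≠ 0) (i : ι) :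
    fderiv ℝ (fun y => pointSourcePres q t y) x (EuclideanSpace.single i 1) =
      -radialField (deriv q t) (-Fintype.card ι) x i := by
  have hn : (Fintype.card ι - 2 : ℝ) ≠ 0 := sub_ne_zero.mpr (mod_cast hι)
  have hexp : (2 - Fintype.card ι - 2 : ℝ) = -Fintype.card ι := by ring
  simp only [pointSourcePres]
  rw [((hasFDerivAt_norm_rpow_of_ne_zero hx _).const_mul _).fderiv, hexp]
  simp only [smul_apply, innerSL_apply_apply,
    EuclideanSpace.inner_single_right, conj_trivial, smul_eq_mul, radialField_apply]
  field_simp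
  ring

theorem pulsating_bubble_stokes_general [DecidableEq ι] (hι : Fintype.card ι ≠ 2) {q : ℝ → ℝ}
    {t : ℝ} (hq : DifferentiableAt ℝ q t) (ν : ℝ) {x : EuclideanSpace ℝ ι} (hx : x ≠ 0) :
    (∀ i : ι,
      ∑ j : ι,
        fderiv ℝ (fun y => fderiv ℝ (fun z => pointSourceVel q t z i) y
          (EuclideanSpace.single j 1)) x (EuclideanSpace.single j 1) = 0) ∧
    (∀ i : ι,
      deriv (fun s => pointSourceVel q s x i) t +
          fderiv ℝ (fun y => pointSourcePres q t y) x (EuclideanSpace.single i 1) =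
        ν *
          ∑ j : ι,
            fderiv ℝ (fun y => fderiv ℝ (fun z => pointSourceVel q t z i) y
              (EuclideanSpace.single j 1)) x (EuclideanSpace.single j 1)) ∧
    (∑ i : ι,
      fderiv ℝ (fun y => pointSourceVel q t y i) x (EuclideanSpace.single i 1) = 0) := by
  have hlap (i : ι) : ∑ j : ι,
      fderiv ℝ (fun y => fderiv ℝ (fun z => pointSourceVel q t z i) y
        (EuclideanSpace.single j 1)) x (EuclideanSpace.single j 1) = 0 := by
    simp only [pointSourceVel, sum_fderiv_fderiv_radialField_apply_single hx, neg_add_cancel,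
      zero_mul]
  refine ⟨hlap, fun i => ?_, ?_⟩
  · rw [hlap i, deriv_pointSourceVel_apply hq, fderiv_pointSourcePres_single hι q t hx,
      add_neg_cancel, mul_zero]
  · simp only [pointSourceVel, sum_fderiv_radialField_apply_single hx, neg_add_cancel, zero_mul]

end PointSource

theorem hasDerivAt_deriv_mul_sq {R : ℝ → ℝ} {t : ℝ} (hR : DifferentiableAt ℝ R t)
    (hR' : DifferentiableAt ℝ (deriv R) t) :
    HasDerivAt (fun s => deriv R s * R s ^ 2)
      (R t * (deriv (deriv R) t * R t + 2 * deriv R t ^ 2)) t := by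
  refine (hR'.hasDerivAt.fun_mul (hR.hasDerivAt.fun_pow 2)).congr_deriv ?_
  ring

theorem pulsatingVel_eq_pointSourceVel (R : ℝ → ℝ) :
    pulsatingVel R = pointSourceVel fun s => deriv R s * R s ^ 2 := by
  funext t x
  rw [pulsatingVel, pointSourceVel, radialField, Fintype.card_fin,
    Real.rpow_neg (norm_nonneg x), Real.rpow_natCast, div_eq_mul_inv]

theorem pulsatingPres_eq_pointSourcePres {R : ℝ → ℝ} {t : ℝ} (hR : DifferentiableAt ℝ R t)
    (hR' : DifferentiableAt ℝ (deriv R) t) :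
    pulsatingPres R t = pointSourcePres (fun s => deriv R s * R s ^ 2) t := by
  have hexp : (2 - (3 : ℕ) : ℝ) = -1 := by norm_num
  funext x
  rw [pulsatingPres, pointSourcePres, (hasDerivAt_deriv_mul_sq hR hR').deriv, Fintype.card_fin,
    hexp, Real.rpow_neg_one]
  norm_num [div_eq_mul_inv]

/-- The pair `(u,p)` with `u(t,x) = R'(t)R(t)²·x/‖x‖³` and
`p(t,x) = R(t)(R''(t)R(t)+2R'(t)²)/‖x‖` solves the unsteady incompressible
Stokes equations on `ℝ³ ∖ {0}`: the componentwise spatial Laplacian of `u`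
vanishes, `∂u/∂t + ∇ₓp = (1/Re) Δₓu`, and `divₓ u = 0`. -/
theorem pulsating_bubble_stokes (R : ℝ → ℝ)
    (hR : Differentiable ℝ R) (hR' : Differentiable ℝ (deriv R))
    (Re : ℝ) (hRe : 0 < Re)
    (x : EuclideanSpace ℝ (Fin 3)) (hx : x ≠ 0) (t : ℝ) :
    (∀ i : Fin 3,
      ∑ j : Fin 3,
        fderiv ℝ (fun y => fderiv ℝ (fun z => pulsatingVel R t z i) y
          (EuclideanSpace.single j 1)) x (EuclideanSpace.single j 1) = 0) ∧
    (∀ i : Fin 3,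
      deriv (fun s => pulsatingVel R s x i) t +
          fderiv ℝ (fun y => pulsatingPres R t y) x (EuclideanSpace.single i 1) =
        (1 / Re) *
          ∑ j : Fin 3,
            fderiv ℝ (fun y => fderiv ℝ (fun z => pulsatingVel R t z i) y
              (EuclideanSpace.single j 1)) x (EuclideanSpace.single j 1)) ∧
    (∑ i : Fin 3,
      fderiv ℝ (fun y => pulsatingVel R t y i) x (EuclideanSpace.single i 1) = 0) := by
  rw [pulsatingVel_eq_pointSourceVel, pulsatingPres_eq_pointSourcePres (hR t) (hR' t)]
  exact pulsating_bubble_stokes_general (by simp)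
    (hasDerivAt_deriv_mul_sq (hR t) (hR' t)).differentiableAt (1 / Re) hx
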